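/- Let ℓ, m be distinct lines of PG(2,q^3) meeting at a point P, and let b be an order-q-subline of m disjoint from ℓ. Then for each order-q-subline c of ℓ disjoint from m (i.e., not containing P), there is exactly one point X of PG(2,q^3), not on ℓ or m, such that the projection of b from X onto ℓ equals c. -/

import Mathlib

open Matrix

/-- Incidence of a point of PG(2,q^3) with the line of covector u. -/
def OnCov (F : Type) [Field F] (x : Projectivization F (Fin 3 → F))
    (u : Fin 3 → F) : Prop :=
  ∑ i, u i * x.rep i = 0

/-- An order-q-subline of PG(2,q^3): the image under a homography g ∈ GL(3,q^3) of the
canonical order-q-subline {(x,y,0) : x,y ∈ GF(q)} of the line z = 0. -/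
def SublinePlane (k F : Type) [Field k] [Field F] [Algebra k F]
    (g : GL (Fin 3) F) : Set (Projectivization F (Fin 3 → F)) :=
  {x | ∃ v : Fin 3 → k, v ≠ 0 ∧ v 2 = 0 ∧ ∃ c : F, c ≠ 0 ∧
    x.rep = c • (g : Matrix (Fin 3) (Fin 3) F).mulVec (fun i => algebraMap k F (v i))}

/-- The projection of a point set b from the point X onto the line of covector u:
the points of that line collinear with X and some point of b. -/
def ProjFrom (F : Type) [Field F] (X : Projectivization F (Fin 3 → F))
    (b : Set (Projectivization F (Fin 3 → F))) (u : Fin 3 → F) :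
    Set (Projectivization F (Fin 3 → F)) :=
  {y | OnCov F y u ∧ ∃ Q ∈ b, Matrix.det (Matrix.of ![X.rep, Q.rep, y.rep]) = 0}

/-!
Represent a subline by a `k`-plane of vectors, `B` in `ker h` and `C` in `ker f`, where `f` and
`h` are the functionals of `ℓ` and `m`. The projection from `X` is induced by the linear map
`T_X v = f(X) v - f(v) X`, and two such `k`-planes have the same points iff they differ by a scalar
of `F`, so after rescaling `X` the condition becomes `T_X(B) = C`. On `ker h` we have
`h ∘ T_X = -h(X) f`, so `-h(X)` is a multiplier carrying the `k`-plane `f(B)` of `F` onto the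
`k`-plane `h(C)`; conversely such a multiplier determines `X`. Since `[F : k] = 3`, a dimension
count yields a multiplier, and it is unique up to `kˣ` because the stabilizer of a `k`-plane is a
field whose degree divides both `2` and `3`.
-/

open Module Pointwise

section Multipliers

variable {k F : Type*} [Field k] [Field F] [Algebra k F]

theorem exists_ne_zero_mul_mem [FiniteDimensional k F] {W U : Submodule k F}
    (h : finrank k W * finrank k (F ⧸ U) < finrank k F) :
    ∃ d : F, d ≠ 0 ∧ ∀ x ∈ W, d * x ∈ U := by
  let φ : F →ₗ[k] W →ₗ[k] F ⧸ U := ((LinearMap.mul k F).domRestrict₂ W).compr₂ U.mkQ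
  have hφ : LinearMap.ker φ ≠ ⊥ :=
    LinearMap.ker_ne_bot_of_finrank_lt (by rwa [finrank_linearMap])
  obtain ⟨d, hd, hd0⟩ := Submodule.exists_mem_ne_zero_of_ne_bot hφ
  refine ⟨d, hd0, fun x hx ↦ (Submodule.Quotient.mk_eq_zero U).1 ?_⟩
  exact LinearMap.congr_fun (LinearMap.mem_ker.1 hd) ⟨x, hx⟩

theorem mul_mem_of_mem_adjoin {W : Submodule k F} {s : F} (hs : ∀ x ∈ W, s * x ∈ W) {e : F}
    (he : e ∈ Algebra.adjoin k {s}) : ∀ x ∈ W, e * x ∈ W := by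
  induction he using Algebra.adjoin_induction with
  | mem a ha => rwa [Set.mem_singleton_iff.1 ha]
  | algebraMap r => exact fun x hx ↦ by simpa only [Algebra.smul_def] using W.smul_mem r hx
  | add a b _ _ ha hb => exact fun x hx ↦ add_mul a b x ▸ W.add_mem (ha x hx) (hb x hx)
  | mul a b _ _ ha hb => exact fun x hx ↦ mul_assoc a b x ▸ ha _ (hb x hx)

theorem mem_range_algebraMap_of_mul_mem [FiniteDimensional k F] {W : Submodule k F}
    (hW : (finrank k W).Coprime (finrank k F)) {s : F} (hs : ∀ x ∈ W, s * x ∈ W) :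
    s ∈ Set.range (algebraMap k F) := by
  let E := IntermediateField.adjoin k {s}
  have hE : E.toSubalgebra = Algebra.adjoin k {s} :=
    IntermediateField.adjoin_simple_toSubalgebra_of_isAlgebraic (Algebra.IsAlgebraic.isAlgebraic s)
  let W' : Submodule E F :=
    { W with smul_mem' := fun e x hx ↦ mul_mem_of_mem_adjoin hs (hE ▸ e.2) x hx }
  have hEW : finrank k E ∣ finrank k W := Dvd.intro _ (finrank_mul_finrank k E W')
  have hEF : finrank k E ∣ finrank k F := Dvd.intro _ (finrank_mul_finrank k E F)
  rw [← IntermediateField.mem_bot, ← IntermediateField.finrank_adjoin_simple_eq_one_iff]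
  exact Nat.eq_one_of_dvd_coprimes hW hEW hEF

end Multipliers

theorem finrank_eq_of_card_eq_pow {k V : Type*} [Field k] [AddCommGroup V] [Module k V] [Fintype k]
    [Fintype V] {n : ℕ} (h : Fintype.card V = Fintype.card k ^ n) : finrank k V = n :=
  Nat.pow_right_injective Fintype.one_lt_card (card_eq_pow_finrank.symm.trans h)

theorem span_range_eq_of_linearIndependent {k V ι : Type*} [Field k] [AddCommGroup V] [Module k V]
    [Fintype ι] {C : Submodule k V} [FiniteDimensional k C] (hC : finrank k C = Fintype.card ι)
    {t : ι → V} (ht : LinearIndependent k t) (htC : ∀ i, t i ∈ C) :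
    Submodule.span k (Set.range t) = C :=
  Submodule.eq_of_le_of_finrank_eq (Submodule.span_le.2 (Set.range_subset_iff.2 htC))
    ((finrank_span_eq_card ht).trans hC.symm)

theorem exists_ne_zero_smul_eq_of_finrank_eq_one {F V : Type*} [Field F] [AddCommGroup V]
    [Module F V] {W : Submodule F V} (hW : finrank F W = 1) {v w : V} (hvW : v ∈ W) (hwW : w ∈ W)
    (hv : v ≠ 0) (hw : w ≠ 0) : ∃ a : F, a ≠ 0 ∧ a • v = w := by
  obtain ⟨a, ha⟩ := exists_smul_eq_of_finrank_eq_one hW (x := (⟨v, hvW⟩ : W))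
    (fun h ↦ hv (congrArg Subtype.val h)) ⟨w, hwW⟩
  have haw : a • v = w := congrArg Subtype.val ha
  exact ⟨a, fun ha0 ↦ hw (by rw [← haw, ha0, zero_smul]), haw⟩

section Duals

variable {F V : Type*} [Field F] [AddCommGroup V] [Module F V]

theorem smul_sub_smul_ne_zero_of_linearIndependent {b : Fin 2 → V} (hb : LinearIndependent F b)
    {x : F} (hx : x ≠ 0) (y : F) : x • b 0 - y • b 1 ≠ 0 := by
  intro h
  refine (linearIndependent_fin2.1 hb).2 (x⁻¹ * y) ?_
  rw [mul_smul, ← sub_eq_zero.1 h, inv_smul_smul₀ hx]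

theorem finrank_ker_inf_ker_add_two [FiniteDimensional F V] {f h : Dual F V}
    (hfh : LinearIndependent F ![f, h]) :
    finrank F ↥(LinearMap.ker f ⊓ LinearMap.ker h) + 2 = finrank F V := by
  have hspan : finrank F (Submodule.span F (Set.range ![f, h])) = 2 := finrank_span_eq_card hfh
  have hker : (Submodule.span F (Set.range ![f, h])).dualCoannihilator =
      LinearMap.ker f ⊓ LinearMap.ker h := by
    apply SetLike.coe_injective
    rw [Submodule.coe_dualCoannihilator_span]
    ext v
    simp [and_comm]
  rw [← Subspace.finrank_add_finrank_dualCoannihilator_eq (Submodule.span F (Set.range ![f, h])),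
    hspan, hker, add_comm]

/-- The linear map inducing the projection from the point `X` onto the hyperplane `ker f`,
normalized by the scalar `f X` instead of dividing by it. -/
def centralProj (f : Dual F V) (X : V) : V →ₗ[F] V :=
  f X • LinearMap.id - f.smulRight X

theorem centralProj_apply (f : Dual F V) (X v : V) : centralProj f X v = f X • v - f v • X := rfl

theorem apply_centralProj_self (f : Dual F V) (X v : V) : f (centralProj f X v) = 0 := by
  simp [centralProj_apply, mul_comm]

theorem apply_centralProj_of_apply_eq_zero (f : Dual F V) {h : Dual F V} (X : V) {v : V}
    (hv : h v = 0) : h (centralProj f X v) = -h X * f v := by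
  simp [centralProj_apply, hv, mul_comm]

theorem injOn_centralProj_ker {f h : Dual F V} {X : V} (hfX : f X ≠ 0) (hhX : h X ≠ 0) :
    Set.InjOn (centralProj f X) (LinearMap.ker h) := by
  rw [← LinearMap.disjoint_ker_iff_injOn, Submodule.disjoint_def]
  intro v hv hT
  rw [LinearMap.mem_ker] at hv hT
  have hfv : f v = 0 := by
    simpa [hT, hhX] using (apply_centralProj_of_apply_eq_zero f X hv).symm
  simpa [centralProj_apply, hfv, hfX] using hT

theorem centralProj_smul (f : Dual F V) (a : F) (X : V) :
    centralProj f (a • X) = a • centralProj f X := by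
  ext v
  simp only [centralProj_apply, LinearMap.smul_apply, map_smul, smul_eq_mul]
  module

theorem centralProj_sub (f : Dual F V) (X Y : V) :
    centralProj f (X - Y) = centralProj f X - centralProj f Y := by
  ext v
  simp only [centralProj_apply, LinearMap.sub_apply, map_sub]
  module

theorem exists_centralProj_eq {f : Dual F V} {b t : Fin 2 → V} (hb : f (b 0) ≠ 0)
    (ht : ∀ i, f (t i) = 0) {a : F}
    (ha : a • (f (b 1) • b 0 - f (b 0) • b 1) = f (b 1) • t 0 - f (b 0) • t 1) :
    ∃ X, f X = a ∧ ∀ i, centralProj f X (b i) = t i := by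
  have hfX : f ((f (b 0))⁻¹ • (a • b 0 - t 0)) = a := by
    simp [ht, mul_comm a, hb]
  refine ⟨_, hfX, Fin.forall_fin_two.2 ⟨?_, ?_⟩⟩
  · rw [centralProj_apply, hfX, smul_inv_smul₀ hb, sub_sub_cancel]
  · rw [centralProj_apply, hfX]
    refine smul_right_injective V hb ?_
    simp only [smul_sub, smul_comm (f (b 1)) (f (b 0))⁻¹,
      smul_inv_smul₀ hb] at ha ⊢
    linear_combination (norm := module) -ha

end Duals

section LinearSets

variable {k F V : Type*} [Field k] [Field F] [AddCommGroup V] [Module F V] [Module k V]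

variable (F) in
/-- The `k`-linear set of a `k`-subspace `B` of an `F`-space: the projective points over `F` having
a representative in `B`. -/
def linearSet (B : Submodule k V) : Set (Projectivization F V) :=
  {x | ∃ a : Fˣ, a • x.rep ∈ B}

theorem mk_mem_linearSet_iff {B : Submodule k V} {v : V} (hv : v ≠ 0) :
    Projectivization.mk F v hv ∈ linearSet F B ↔ ∃ a : Fˣ, a • v ∈ B := by
  obtain ⟨c, hc⟩ := Projectivization.exists_smul_eq_mk_rep F v hv
  constructor
  · rintro ⟨a, ha⟩
    exact ⟨a * c, by rwa [mul_smul, hc]⟩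
  · rintro ⟨a, ha⟩
    exact ⟨a * c⁻¹, by rwa [← hc, smul_smul, inv_mul_cancel_right]⟩

theorem mk_mem_linearSet {B : Submodule k V} {v : V} (hvB : v ∈ B) (hv : v ≠ 0) :
    Projectivization.mk F v hv ∈ linearSet F B :=
  (mk_mem_linearSet_iff hv).2 ⟨1, by rwa [one_smul]⟩

theorem linearSet_smul [SMulCommClass F k V] (a : Fˣ) (B : Submodule k V) :
    linearSet F (a • B) = linearSet F B := by
  ext x
  constructor
  · rintro ⟨c, v, hv, hvc⟩
    exact ⟨a⁻¹ * c, by rw [mul_smul, ← hvc]; simpa [Units.smul_def, smul_smul] using hv⟩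
  · rintro ⟨c, hc⟩
    exact ⟨a * c, by rw [mul_smul]; exact Submodule.smul_mem_pointwise_smul _ _ _ hc⟩

/-- `B` represents a `k`-subline of the line `ker f` that is disjoint from `ker h`: its points are
those of `linearSet F B`. -/
structure IsSublineOf (f h : Dual F V) (B : Submodule k V) : Prop where
  exists_span_eq : ∃ b : Fin 2 → V, LinearIndependent F b ∧ Submodule.span k (Set.range b) = B
  apply_eq_zero : ∀ v ∈ B, f v = 0
  eq_zero_of_apply_eq_zero : ∀ v ∈ B, h v = 0 → v = 0

namespace IsSublineOf

variable {f h : Dual F V} {B C : Submodule k V}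

theorem injOn (hB : IsSublineOf f h B) : Set.InjOn h B := fun v hv w hw hvw ↦
  sub_eq_zero.1 <| hB.eq_zero_of_apply_eq_zero _ (B.sub_mem hv hw) <| by
    rw [map_sub, hvw, sub_self]

theorem exists_basis (hB : IsSublineOf f h B) : ∃ b : Fin 2 → V, LinearIndependent F b ∧
    Submodule.span k (Set.range b) = B ∧ ∀ i, b i ∈ B ∧ h (b i) ≠ 0 := by
  obtain ⟨b, hb, rfl⟩ := hB.exists_span_eq
  have hmem (i) : b i ∈ Submodule.span k (Set.range b) := Submodule.subset_span ⟨i, rfl⟩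
  exact ⟨b, hb, rfl, fun i ↦
    ⟨hmem i, fun h0 ↦ hb.ne_zero i (hB.eq_zero_of_apply_eq_zero _ (hmem i) h0)⟩⟩

theorem eq_zero_of_centralProj_eq_zero (hB : IsSublineOf h f B) {Z : V}
    (hZ : ∀ v ∈ B, centralProj f Z v = 0) : Z = 0 := by
  obtain ⟨b, hb, -, hbmem⟩ := hB.exists_basis
  have hfZ_smul : ∀ i, f Z • b i = f (b i) • Z := fun i ↦ sub_eq_zero.1 (hZ _ (hbmem i).1)
  have hfZ : f Z = 0 := by
    refine (smul_eq_zero.1 ?_).resolve_right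
      (smul_sub_smul_ne_zero_of_linearIndependent hb (hbmem 1).2 (f (b 0)))
    rw [smul_sub, smul_comm, hfZ_smul, smul_comm (f Z), hfZ_smul, smul_comm, sub_self]
  exact (smul_eq_zero.1 ((hfZ_smul 0).symm.trans (by rw [hfZ, zero_smul]))).resolve_left
    (hbmem 0).2

theorem finrank_ker_inf_ker (hV : finrank F V = 3) (hB : IsSublineOf h f B)
    (hC : IsSublineOf f h C) : finrank F ↥(LinearMap.ker f ⊓ LinearMap.ker h) = 1 := by
  have := finite_of_finrank_pos (hV ▸ three_pos)
  obtain ⟨b, -, -, hb⟩ := hB.exists_basis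
  obtain ⟨c, -, -, hc⟩ := hC.exists_basis
  have hfh : LinearIndependent F ![f, h] := by
    refine LinearIndependent.pair_iff.2 fun x y hxy ↦ ⟨?_, ?_⟩
    · simpa [hB.apply_eq_zero _ (hb 0).1, (hb 0).2] using LinearMap.congr_fun hxy (b 0)
    · simpa [hC.apply_eq_zero _ (hc 0).1, (hc 0).2] using LinearMap.congr_fun hxy (c 0)
  have := finrank_ker_inf_ker_add_two hfh
  lia

end IsSublineOf

end LinearSets

section Sublines

variable {k F V : Type*} [Field k] [Field F] [Algebra k F] [AddCommGroup V] [Module F V]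
  [Module k V] [IsScalarTower k F V]

theorem linearIndependent_of_mem_span {ι : Type*} [Finite ι] {s t : ι → V}
    (hs : LinearIndependent F s) (ht : LinearIndependent k t)
    (hts : ∀ i, t i ∈ Submodule.span k (Set.range s)) : LinearIndependent F t := by
  have := Fintype.ofFinite ι
  have := FiniteDimensional.span_of_finite k (Set.finite_range s)
  have hspan : Submodule.span k (Set.range t) = Submodule.span k (Set.range s) :=
    span_range_eq_of_linearIndependent (finrank_span_eq_card (hs.restrict_scalars' k)) ht hts
  rw [linearIndependent_iff_card_eq_finrank_span, Set.finrank,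
    ← Submodule.span_span_of_tower k F, hspan, Submodule.span_span_of_tower,
    finrank_span_eq_card hs]

theorem map_centralProj_smul (f : Dual F V) (X : V) (a : Fˣ) (B : Submodule k V) :
    B.map ((centralProj f (a • X)).restrictScalars k) =
      a • B.map ((centralProj f X).restrictScalars k) := by
  change _ = Submodule.map _ _
  rw [← Submodule.map_comp, Units.smul_def, centralProj_smul]
  rfl

theorem exists_smul_mem_of_linearSet_subset {d : Fin 2 → V} (hd : LinearIndependent F d)
    {C : Submodule k V} (hC : finrank k C = 2)
    (h : linearSet F (Submodule.span k (Set.range d)) ⊆ linearSet F C) :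
    ∃ a : Fˣ, ∀ i, a • d i ∈ C := by
  have hrep : ∀ v ∈ Submodule.span k (Set.range d), v ≠ 0 → ∃ a : Fˣ, a • v ∈ C :=
    fun v hv hv0 ↦ (mk_mem_linearSet_iff hv0).1 (h (mk_mem_linearSet hv hv0))
  have hdmem (i) : d i ∈ Submodule.span k (Set.range d) := Submodule.subset_span ⟨i, rfl⟩
  choose c hc using fun i ↦ hrep (d i) (hdmem i) (hd.ne_zero i)
  obtain ⟨a, ha⟩ := hrep (d 0 + d 1) (add_mem (hdmem 0) (hdmem 1)) (by
    simpa [neg_one_smul] using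
      smul_sub_smul_ne_zero_of_linearIndependent hd one_ne_zero (-1))
  have hspan : Submodule.span k (Set.range fun i ↦ c i • d i) = C :=
    have := finite_of_finrank_pos (hC ▸ two_pos)
    span_range_eq_of_linearIndependent hC ((hd.units_smul c).restrict_scalars' k) hc
  obtain ⟨r, hr⟩ := (Submodule.mem_span_range_iff_exists_fun k).1 (hspan ▸ ha)
  have hcoord : ∀ i, r i • (c i : F) - a = 0 := by
    refine Fintype.linearIndependent_iff.1 hd (fun i ↦ r i • (c i : F) - a) ?_
    simp only [Fin.sum_univ_two, sub_smul, smul_assoc, Units.smul_def, smul_add] at hr ⊢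
    rw [sub_add_sub_comm, hr, sub_self]
  refine ⟨a, fun i ↦ ?_⟩
  rw [Units.smul_def, ← sub_eq_zero.1 (hcoord i), smul_assoc]
  exact C.smul_mem _ (hc i)

namespace IsSublineOf

variable {f h : Dual F V} {B C : Submodule k V}

theorem finrank_eq (hB : IsSublineOf f h B) : finrank k B = 2 := by
  obtain ⟨b, hb, rfl⟩ := hB.exists_span_eq
  exact finrank_span_eq_card (hb.restrict_scalars' k)

theorem finiteDimensional (hB : IsSublineOf f h B) : FiniteDimensional k B :=
  finite_of_finrank_pos (hB.finrank_eq ▸ two_pos)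

theorem finrank_map (hB : IsSublineOf f h B) :
    finrank k (B.map (h.restrictScalars k)) = 2 := by
  rw [← LinearMap.range_domRestrict, LinearMap.finrank_range_of_inj, hB.finrank_eq]
  exact Set.injOn_iff_injective.1 hB.injOn

theorem linearSet_eq_iff (hB : IsSublineOf f h B) (hC : IsSublineOf f h C) :
    linearSet F B = linearSet F C ↔ ∃ a : Fˣ, a • B = C := by
  constructor
  · intro hBC
    obtain ⟨b, hb, rfl⟩ := hB.exists_span_eq
    obtain ⟨a, ha⟩ := exists_smul_mem_of_linearSet_subset hb hC.finrank_eq hBC.subset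
    have := hC.finiteDimensional
    refine ⟨a, ?_⟩
    change Submodule.map _ _ = _
    rw [Submodule.map_span, ← Set.range_comp]
    exact span_range_eq_of_linearIndependent hC.finrank_eq
      ((hb.units_smul fun _ ↦ a).restrict_scalars' k) ha
  · rintro ⟨a, rfl⟩
    exact (linearSet_smul a B).symm

theorem map_centralProj (hB : IsSublineOf h f B) {X : V} (hfX : f X ≠ 0) (hhX : h X ≠ 0) :
    IsSublineOf f h (B.map ((centralProj f X).restrictScalars k)) := by
  refine ⟨?_, ?_, ?_⟩
  · obtain ⟨b, hb, hbB, hbmem⟩ := hB.exists_basis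
    have hker : Submodule.span F (Set.range b) ≤ LinearMap.ker h :=
      Submodule.span_le.2 (Set.range_subset_iff.2 fun i ↦ hB.apply_eq_zero _ (hbmem i).1)
    refine ⟨centralProj f X ∘ b, hb.map_injOn _ ((injOn_centralProj_ker hfX hhX).mono hker), ?_⟩
    rw [← hbB, Submodule.map_span, ← Set.range_comp]
    rfl
  · rintro _ ⟨v, -, rfl⟩
    exact apply_centralProj_self f X v
  · rintro _ ⟨v, hv, rfl⟩ h0
    have hfv : f v = 0 := by
      have h1 := apply_centralProj_of_apply_eq_zero f X (hB.apply_eq_zero v hv)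
      simpa [hhX] using h1.symm.trans h0
    rw [hB.eq_zero_of_apply_eq_zero v hv hfv, map_zero]

theorem exists_smul_eq_of_map_centralProj_eq (h3 : finrank k F = 3) (hB : IsSublineOf h f B)
    (hC : IsSublineOf f h C) {X Y : V} (hhX : h X ≠ 0)
    (hX : B.map ((centralProj f X).restrictScalars k) = C)
    (hY : B.map ((centralProj f Y).restrictScalars k) = C) : ∃ s : F, s • X = Y := by
  have hfin : FiniteDimensional k F := finite_of_finrank_pos (h3 ▸ three_pos)
  have hTX : ∀ v ∈ B, centralProj f X v ∈ C := fun v hv ↦ hX ▸ Submodule.mem_map_of_mem hv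
  have hTY : ∀ v ∈ B, centralProj f Y v ∈ C := fun v hv ↦ hY ▸ Submodule.mem_map_of_mem hv
  let s := h Y / h X
  have hhT : ∀ v ∈ B, h (centralProj f Y v) = s * h (centralProj f X v) := by
    intro v hv
    rw [apply_centralProj_of_apply_eq_zero f _ (hB.apply_eq_zero v hv),
      apply_centralProj_of_apply_eq_zero f _ (hB.apply_eq_zero v hv)]
    simp only [s]
    field_simp
  have hstab : ∀ x ∈ C.map (h.restrictScalars k), s * x ∈ C.map (h.restrictScalars k) := by
    rintro _ ⟨_, hc, rfl⟩
    obtain ⟨v, hv, rfl⟩ := hX ▸ hc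
    exact ⟨centralProj f Y v, hTY v hv, hhT v hv⟩
  obtain ⟨r, hr⟩ := mem_range_algebraMap_of_mul_mem (by rw [hC.finrank_map, h3]; decide) hstab
  refine ⟨s, (sub_eq_zero.1 (hB.eq_zero_of_centralProj_eq_zero (f := f) fun v hv ↦ ?_)).symm⟩
  have hrT : r • centralProj f X v = s • centralProj f X v := by rw [← hr, algebraMap_smul]
  have hTeq : centralProj f Y v = r • centralProj f X v := by
    refine hC.injOn (hTY v hv) (C.smul_mem r (hTX v hv)) ?_
    rw [hhT v hv, hrT, map_smul, smul_eq_mul]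
  rw [centralProj_sub, centralProj_smul, LinearMap.sub_apply, LinearMap.smul_apply, hTeq, hrT,
    sub_self]

theorem exists_multiplier (h3 : finrank k F = 3) (hB : IsSublineOf h f B)
    (hC : IsSublineOf f h C) :
    ∃ d : F, d ≠ 0 ∧ ∀ v ∈ B, ∃ t ∈ C, h t = d * f v := by
  have := finite_of_finrank_pos (h3 ▸ three_pos)
  have hquot := (C.map (h.restrictScalars k)).finrank_quotient_add_finrank
  obtain ⟨d, hd0, hd⟩ : ∃ d : F, d ≠ 0 ∧
      ∀ x ∈ B.map (f.restrictScalars k), d * x ∈ C.map (h.restrictScalars k) :=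
    exists_ne_zero_mul_mem (by rw [hB.finrank_map]; rw [hC.finrank_map] at hquot; lia)
  exact ⟨d, hd0, fun v hv ↦ hd _ (Submodule.mem_map_of_mem hv)⟩

theorem linearIndependent_of_apply_eq_mul (hB : IsSublineOf h f B) {d : F}
    (hd : d ≠ 0) {ι : Type*} {b t : ι → V} (hb : LinearIndependent k b)
    (hbB : ∀ i, b i ∈ B) (ht : ∀ i, h (t i) = d * f (b i)) :
    LinearIndependent k t := by
  have hspan : Submodule.span k (Set.range b) ≤ B :=
    Submodule.span_le.2 (Set.range_subset_iff.2 hbB)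
  have hcomp : h.restrictScalars k ∘ t = (LinearMap.mulLeft k d ∘ₗ f.restrictScalars k) ∘ b :=
    funext ht
  refine LinearIndependent.of_comp (h.restrictScalars k) ?_
  rw [hcomp]
  exact hb.map_injOn _ fun v hv w hw hvw ↦
    hB.injOn (hspan hv) (hspan hw) (mul_left_cancel₀ hd hvw)

theorem exists_map_centralProj_eq (h3 : finrank k F = 3) (hV : finrank F V = 3)
    (hB : IsSublineOf h f B) (hC : IsSublineOf f h C) :
    ∃ X, f X ≠ 0 ∧ h X ≠ 0 ∧ B.map ((centralProj f X).restrictScalars k) = C := by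
  have := hC.finiteDimensional
  obtain ⟨d, hd0, hd⟩ := hB.exists_multiplier h3 hC
  obtain ⟨b, hb, hbB, hbmem⟩ := hB.exists_basis
  choose t htC hht using fun i ↦ hd (b i) (hbmem i).1
  have ht : LinearIndependent k t := hB.linearIndependent_of_apply_eq_mul hd0
    (hb.restrict_scalars' k) (fun i ↦ (hbmem i).1) hht
  have htF : LinearIndependent F t := by
    obtain ⟨c, hc, hcC⟩ := hC.exists_span_eq
    exact linearIndependent_of_mem_span hc ht (hcC ▸ htC)
  obtain ⟨a, ha0, ha⟩ : ∃ a : F, a ≠ 0 ∧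
      a • (f (b 1) • b 0 - f (b 0) • b 1) = f (b 1) • t 0 - f (b 0) • t 1 := by
    refine exists_ne_zero_smul_eq_of_finrank_eq_one (finrank_ker_inf_ker hV hB hC) ⟨?_, ?_⟩ ⟨?_, ?_⟩
      (smul_sub_smul_ne_zero_of_linearIndependent hb (hbmem 1).2 _)
      (smul_sub_smul_ne_zero_of_linearIndependent htF (hbmem 1).2 _)
    · simp [mul_comm]
    · simp [hB.apply_eq_zero _ (hbmem _).1]
    · simp [hC.apply_eq_zero _ (htC _)]
    · simp [hht, mul_left_comm, mul_comm]
  obtain ⟨X, rfl, hX⟩ :=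
    exists_centralProj_eq (hbmem 0).2 (fun i ↦ hC.apply_eq_zero _ (htC i)) ha
  have hhX : h X ≠ 0 := by
    have h0 := apply_centralProj_of_apply_eq_zero f X (hB.apply_eq_zero _ (hbmem 0).1)
    rw [hX, hht] at h0
    exact neg_ne_zero.1 (left_ne_zero_of_mul (h0 ▸ mul_ne_zero hd0 (hbmem 0).2))
  refine ⟨X, ha0, hhX, ?_⟩
  rw [← hbB, Submodule.map_span, ← Set.range_comp]
  change Submodule.span k (Set.range fun i ↦ centralProj f X (b i)) = C
  rw [funext hX]
  exact span_range_eq_of_linearIndependent hC.finrank_eq ht htC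

end IsSublineOf

end Sublines

section Coordinates

variable {F : Type} [Field F]

theorem onCov_mk_iff {u v : Fin 3 → F} (hv : v ≠ 0) :
    OnCov F (Projectivization.mk F v hv) u ↔ u ⬝ᵥ v = 0 := by
  obtain ⟨a, ha⟩ := Projectivization.exists_smul_eq_mk_rep F v hv
  change u ⬝ᵥ _ = 0 ↔ _
  rw [← ha, dotProduct_smul, smul_eq_zero_iff_eq]

theorem det_of_eq_zero_iff_exists_smul {X v y : Fin 3 → F} {f : Dual F (Fin 3 → F)} (hfX : f X ≠ 0)
    (hv : centralProj f X v ≠ 0) (hy : f y = 0) :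
    det (of ![X, v, y]) = 0 ↔ ∃ a : F, a • centralProj f X v = y := by
  constructor
  · intro hdet
    obtain ⟨c, hc0, hc⟩ := exists_vecMul_eq_zero_iff.2 hdet
    have hsum : c 0 • X + c 1 • v + c 2 • y = 0 := by
      rwa [vecMul_eq_sum, Fin.sum_univ_three] at hc
    have hproj : c 1 • centralProj f X v + (c 2 * f X) • y = 0 := by
      simpa [centralProj_apply f X X, centralProj_apply f X y, hy, smul_smul] using
        congrArg (centralProj f X) hsum
    have hc2 : c 2 ≠ 0 := by
      intro h2
      have h1 : c 1 = 0 := by simpa [h2, hv] using hproj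
      have hX : X ≠ 0 := fun hX ↦ hfX (by rw [hX, map_zero])
      have h0 : c 0 = 0 := by simpa [h1, h2, hX] using hsum
      exact hc0 (funext (Fin.forall_fin_succ.2 ⟨h0, Fin.forall_fin_two.2 ⟨h1, h2⟩⟩))
    refine ⟨-(c 2 * f X)⁻¹ * c 1, ?_⟩
    rw [mul_smul, eq_neg_of_add_eq_zero_left hproj, neg_smul, smul_neg, neg_neg,
      inv_smul_smul₀ (mul_ne_zero hc2 hfX)]
  · rintro ⟨a, rfl⟩
    refine exists_vecMul_eq_zero_iff.1 ⟨![a * f v, -(a * f X), 1], fun h ↦ ?_, ?_⟩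
    · exact one_ne_zero (congrFun h 2)
    · rw [vecMul_eq_sum, Fin.sum_univ_three]
      change (a * f v) • X + -(a * f X) • v + (1 : F) • a • (f X • v - f v • X) = 0
      module

theorem IsSublineOf.projFrom_linearSet {k : Type*} [Field k] [Algebra k F]
    {u : Fin 3 → F} {h : Dual F (Fin 3 → F)} {B : Submodule k (Fin 3 → F)}
    (hB : IsSublineOf h (dotProductEquiv F (Fin 3) u) B) {X : Projectivization F (Fin 3 → F)}
    (hXu : ¬ OnCov F X u) (hhX : h X.rep ≠ 0) :
    ProjFrom F X (linearSet F B) u = linearSet F (B.map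
      ((centralProj (dotProductEquiv F (Fin 3) u) X.rep).restrictScalars k)) := by
  let f := dotProductEquiv F (Fin 3) u
  have hfX : f X.rep ≠ 0 := hXu
  have hproj : ∀ Q ∈ linearSet F B, centralProj f X.rep Q.rep ≠ 0 := by
    rintro Q ⟨a, ha⟩ hQ
    have hhQ : h Q.rep = 0 := by simpa [Units.smul_def] using hB.apply_eq_zero _ ha
    exact Q.rep_nonzero (injOn_centralProj_ker hfX hhX hhQ (map_zero h) (by rw [hQ, map_zero]))
  ext y
  constructor
  · rintro ⟨hy, Q, hQ, hdet⟩
    obtain ⟨e, he⟩ := (det_of_eq_zero_iff_exists_smul hfX (hproj Q hQ) hy).1 hdet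
    have he0 : e ≠ 0 := by rintro rfl; exact y.rep_nonzero (by rw [← he, zero_smul])
    obtain ⟨a, ha⟩ := hQ
    refine ⟨a * (Units.mk0 e he0)⁻¹, a • Q.rep, ha, ?_⟩
    rw [mul_smul, ← he]
    simp [Units.smul_def, he0, f]
  · rintro ⟨c, v, hv, hvy⟩
    have hy : f y.rep = 0 := by
      have hfy : f (c • y.rep) = 0 := hvy ▸ apply_centralProj_self f X.rep v
      simpa [Units.smul_def] using hfy
    have hv0 : v ≠ 0 := by
      rintro rfl
      exact y.rep_nonzero (by simpa [Units.smul_def] using hvy.symm)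
    have hQ := mk_mem_linearSet (F := F) hv hv0
    refine ⟨hy, _, hQ, (det_of_eq_zero_iff_exists_smul hfX (hproj _ hQ) hy).2 ?_⟩
    obtain ⟨a, ha⟩ := Projectivization.exists_smul_eq_mk_rep F v hv0
    refine ⟨↑(c⁻¹ * a⁻¹), ?_⟩
    rw [← ha, Units.smul_def a, map_smul]
    change centralProj f X.rep v = c • y.rep at hvy
    simp [hvy, mul_smul, Units.smul_def]

end Coordinates

section SublineModule

variable {k F : Type} [Field k] [Field F] [Algebra k F]

variable (k) in
/-- The `k`-plane of vectors representing the points of `SublinePlane k F g`, spanned by the first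
two columns of `g`. -/
def sublineModule (g : GL (Fin 3) F) : Submodule k (Fin 3 → F) :=
  Submodule.span k (Set.range fun j : Fin 2 ↦ (g : Matrix (Fin 3) (Fin 3) F).col j.castSucc)

theorem linearIndependent_col_castSucc (g : GL (Fin 3) F) :
    LinearIndependent F fun j : Fin 2 ↦ (g : Matrix (Fin 3) (Fin 3) F).col j.castSucc :=
  (linearIndependent_cols_of_isUnit g.isUnit).comp _ (Fin.castSucc_injective 2)

theorem mem_sublineModule_iff {g : GL (Fin 3) F} {x : Fin 3 → F} :
    x ∈ sublineModule k g ↔ ∃ v : Fin 3 → k, v 2 = 0 ∧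
      (g : Matrix (Fin 3) (Fin 3) F) *ᵥ (fun i ↦ algebraMap k F (v i)) = x := by
  have hcomb (v : Fin 3 → k) (hv : v 2 = 0) :
      (g : Matrix (Fin 3) (Fin 3) F) *ᵥ (fun i ↦ algebraMap k F (v i)) =
        ∑ j : Fin 2, v j.castSucc • (g : Matrix (Fin 3) (Fin 3) F).col j.castSucc := by
    simp only [mulVec_eq_sum, op_smul_eq_smul, algebraMap_smul]
    rw [Fin.sum_univ_castSucc, show v (Fin.last 2) = 0 from hv, zero_smul, add_zero]
    rfl
  rw [sublineModule, Submodule.mem_span_range_iff_exists_fun]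
  constructor
  · rintro ⟨c, rfl⟩
    exact ⟨Fin.snoc c 0, rfl, by rw [hcomb _ rfl]; simp only [Fin.snoc_castSucc]⟩
  · rintro ⟨v, hv2, rfl⟩
    exact ⟨fun j ↦ v j.castSucc, (hcomb v hv2).symm⟩

theorem sublinePlane_eq_linearSet (g : GL (Fin 3) F) :
    SublinePlane k F g = linearSet F (sublineModule k g) := by
  ext x
  constructor
  · rintro ⟨v, -, hv2, c, hc, hx⟩
    refine ⟨(Units.mk0 c hc)⁻¹, (mem_sublineModule_iff (k := k)).2 ⟨v, hv2, ?_⟩⟩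
    rw [hx]
    exact (inv_smul_smul₀ hc _).symm
  · rintro ⟨a, ha⟩
    obtain ⟨v, hv2, hv⟩ := mem_sublineModule_iff.1 ha
    have hx : x.rep = (↑a⁻¹ : F) • (g : Matrix (Fin 3) (Fin 3) F) *ᵥ
        (fun i ↦ algebraMap k F (v i)) := by
      rw [hv]
      exact (inv_smul_smul a _).symm
    refine ⟨v, ?_, hv2, _, a⁻¹.ne_zero, hx⟩
    rintro rfl
    exact x.rep_nonzero (by simpa [← Pi.zero_def] using hx)

theorem mk_mem_sublinePlane {g : GL (Fin 3) F} {v : Fin 3 → F} (hv : v ∈ sublineModule k g)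
    (hv0 : v ≠ 0) : .mk F v hv0 ∈ SublinePlane k F g :=
  sublinePlane_eq_linearSet (k := k) g ▸ mk_mem_linearSet hv hv0

theorem isSublineOf_sublineModule {g : GL (Fin 3) F} {u w : Fin 3 → F}
    (hu : ∀ x ∈ SublinePlane k F g, OnCov F x u) (hw : ∀ x ∈ SublinePlane k F g, ¬ OnCov F x w) :
    IsSublineOf (dotProductEquiv F (Fin 3) u) (dotProductEquiv F (Fin 3) w)
      (sublineModule k g) where
  exists_span_eq := ⟨_, linearIndependent_col_castSucc g, rfl⟩
  apply_eq_zero v hv := by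
    obtain rfl | hv0 := eq_or_ne v 0
    · exact map_zero _
    · exact (onCov_mk_iff hv0).1 (hu _ (mk_mem_sublinePlane hv hv0))
  eq_zero_of_apply_eq_zero v hv hwv := by
    by_contra hv0
    exact hw _ (mk_mem_sublinePlane hv hv0) ((onCov_mk_iff hv0).2 hwv)

theorem projFrom_sublinePlane_eq_iff {g g' : GL (Fin 3) F} {u w : Fin 3 → F}
    (hB : IsSublineOf (dotProductEquiv F (Fin 3) w) (dotProductEquiv F (Fin 3) u)
      (sublineModule k g))
    (hC : IsSublineOf (dotProductEquiv F (Fin 3) u) (dotProductEquiv F (Fin 3) w)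
      (sublineModule k g'))
    {X : Projectivization F (Fin 3 → F)} (hXu : ¬ OnCov F X u) (hXw : ¬ OnCov F X w) :
    ProjFrom F X (SublinePlane k F g) u = SublinePlane k F g' ↔
      ∃ a : Fˣ, (sublineModule k g).map ((centralProj (dotProductEquiv F (Fin 3) u)
        (a • X.rep)).restrictScalars k) = sublineModule k g' := by
  simp only [map_centralProj_smul]
  rw [sublinePlane_eq_linearSet, hB.projFrom_linearSet hXu hXw, sublinePlane_eq_linearSet,
    (hB.map_centralProj hXu hXw).linearSet_eq_iff hC]

end SublineModule

theorem stmt18_general {k F : Type} [Field k] [Field F] [Algebra k F] (h3 : finrank k F = 3)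
    {u w : Fin 3 → F} {b c : Set (Projectivization F (Fin 3 → F))}
    (hb : ∃ g : GL (Fin 3) F, b = SublinePlane k F g)
    (hbm : ∀ x ∈ b, OnCov F x w) (hbl : ∀ x ∈ b, ¬ OnCov F x u)
    (hc : ∃ g : GL (Fin 3) F, c = SublinePlane k F g)
    (hcl : ∀ x ∈ c, OnCov F x u) (hcm : ∀ x ∈ c, ¬ OnCov F x w) :
    ∃! X : Projectivization F (Fin 3 → F),
      ¬ OnCov F X u ∧ ¬ OnCov F X w ∧ ProjFrom F X b u = c := by
  obtain ⟨g, rfl⟩ := hb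
  obtain ⟨g', rfl⟩ := hc
  have hB := isSublineOf_sublineModule hbm hbl
  have hC := isSublineOf_sublineModule hcl hcm
  obtain ⟨v, hvu, hvw, hv⟩ := hB.exists_map_centralProj_eq h3 (finrank_fin_fun F) hC
  have hv0 : v ≠ 0 := by rintro rfl; exact hvu (map_zero _)
  have hXu : ¬ OnCov F (.mk F v hv0) u := (onCov_mk_iff hv0).not.2 hvu
  have hXw : ¬ OnCov F (.mk F v hv0) w := (onCov_mk_iff hv0).not.2 hvw
  refine ⟨.mk F v hv0, ⟨hXu, hXw, ?_⟩, ?_⟩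
  · obtain ⟨a, ha⟩ := Projectivization.exists_smul_eq_mk_rep F v hv0
    refine (projFrom_sublinePlane_eq_iff hB hC hXu hXw).2 ⟨a⁻¹, ?_⟩
    rwa [← ha, inv_smul_smul]
  · rintro Y ⟨hYu, hYw, hY⟩
    obtain ⟨a, ha⟩ := (projFrom_sublinePlane_eq_iff hB hC hYu hYw).1 hY
    obtain ⟨s, hs⟩ := hB.exists_smul_eq_of_map_centralProj_eq h3 hC hvw hv ha
    rw [← Y.mk_rep, Projectivization.mk_eq_mk_iff']
    exact ⟨(↑a⁻¹ : F) * s, by rw [mul_smul, hs]; exact inv_smul_smul a _⟩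

/-- Let ℓ, m be distinct lines of PG(2,q^3), b an order-q-subline of m
disjoint from ℓ. Then each order-q-subline c of ℓ disjoint from m is the projection of
b from exactly one point X not on ℓ or m. -/
theorem stmt18 (p n q : ℕ) (hp : p.Prime) (hn : 0 < n) (hq : q = p ^ n)
    (k F : Type) [Field k] [Field F] [Algebra k F] [Fintype k] [Fintype F]
    (hk : Fintype.card k = q) (hF : Fintype.card F = q ^ 3)
    (u w : Fin 3 → F) (hu : u ≠ 0) (hw : w ≠ 0) (huw : ¬ ∃ a : F, w = a • u)
    (b c : Set (Projectivization F (Fin 3 → F)))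
    (hb : ∃ g : GL (Fin 3) F, b = SublinePlane k F g)
    (hbm : ∀ x ∈ b, OnCov F x w) (hbl : ∀ x ∈ b, ¬ OnCov F x u)
    (hc : ∃ g : GL (Fin 3) F, c = SublinePlane k F g)
    (hcl : ∀ x ∈ c, OnCov F x u) (hcm : ∀ x ∈ c, ¬ OnCov F x w) :
    ∃! X : Projectivization F (Fin 3 → F),
      ¬ OnCov F X u ∧ ¬ OnCov F X w ∧ ProjFrom F X b u = c := by
  exact stmt18_general (finrank_eq_of_card_eq_pow (by rw [hF, hk])) hb hbm hbl hc hcl hcm
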